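/- Let T be a locally simple complete CLO theory such that IT(T) is countably infinite and has infinitely many nonisolated members. Then T has exactly 2^{ℵ₀} countable models up to isomorphism. -/

import Mathlib

open FirstOrder Language Set

/-- Relation symbols of the language `L_κ` of colored linear orders:
a binary `<` and a unary color predicate for each `i : ι`. -/
inductive CLORel (ι : Type) : ℕ → Type
  | lt : CLORel ι 2
  | color (i : ι) : CLORel ι 1

/-- The language `L_κ`, where the colors are indexed by `ι`. -/
def CLOLang (ι : Type) : Language :=
  ⟨fun _ => Empty, CLORel ι⟩

/-- Interpretation of the relation symbols on a linear order `M` with colors `c`. -/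
def cloRelMap {ι M : Type} [LinearOrder M] (c : ι → Set M) :
    ∀ {n}, CLORel ι n → (Fin n → M) → Prop
  | _, .lt => fun v => v 0 < v 1
  | _, .color i => fun v => v 0 ∈ c i

/-- The canonical `L_κ`-structure (a colored linear order, CLO) on a linear
order `M` whose colors are given by `c : ι → Set M`. -/
def CLOStr (ι M : Type) [LinearOrder M] (c : ι → Set M) : (CLOLang ι).Structure M where
  funMap := fun f => Empty.elim f
  RelMap := cloRelMap c

/-- Satisfaction of an `L_κ`-formula in the CLO `(M, <, c)`. -/
def Sat {ι : Type} (M : Type) [LinearOrder M] (c : ι → Set M) {α : Type}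
    (φ : (CLOLang ι).Formula α) (v : α → M) : Prop :=
  letI := CLOStr ι M c
  φ.Realize v

/-- The induced colors on a subset of a CLO. -/
def subColor {ι M : Type} (c : ι → Set M) (s : Set M) : ι → Set s :=
  fun i => {x | (x : M) ∈ c i}

/-- Elementary equivalence of CLOs. -/
def CLOEquiv (ι : Type) (M : Type) [LinearOrder M] (cM : ι → Set M)
    (N : Type) [LinearOrder N] (cN : ι → Set N) : Prop :=
  letI := CLOStr ι M cM
  letI := CLOStr ι N cN
  M ≅[CLOLang ι] N

/-- Isomorphism of CLOs (as `L_κ`-structures). -/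
def CLOIso (ι : Type) (M : Type) [LinearOrder M] (cM : ι → Set M)
    (N : Type) [LinearOrder N] (cN : ι → Set N) : Prop :=
  letI := CLOStr ι M cM
  letI := CLOStr ι N cN
  Nonempty (M ≃[CLOLang ι] N)

/-- The complete theory of a CLO. -/
def CLOTheory (ι : Type) (M : Type) [LinearOrder M] (c : ι → Set M) : (CLOLang ι).Theory :=
  letI := CLOStr ι M c
  (CLOLang ι).completeTheory M

/-- The induced colors on a lexicographic sum `Σₗ i, A i` of CLOs. -/
def sigmaColor {ι I : Type} {A : I → Type} (c : ∀ i, ι → Set (A i)) :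
    ι → Set (Σₗ i, A i) :=
  fun k => {x | (ofLex x).2 ∈ c (ofLex x).1 k}

/-- The induced colors on a two-term lexicographic sum `α ⊕ₗ β` of CLOs. -/
def sumColor2 {ι α β : Type} (ca : ι → Set α) (cb : ι → Set β) : ι → Set (α ⊕ₗ β) :=
  fun k => {x | Sum.elim (· ∈ ca k) (· ∈ cb k) (ofLex x)}

/-- The set defined by a parameter-free formula in one variable in a CLO. -/
def FmlSet (ι : Type) (M : Type) [LinearOrder M] (c : ι → Set M)
    (φ : (CLOLang ι).Formula Unit) : Set M :=
  {x | Sat M c φ fun _ => x}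

/-- A CLO is self-additive if it has more than one point and its only
convex parameter-free-definable subsets are `∅` and the whole order. -/
def SelfAdditive (ι : Type) (M : Type) [LinearOrder M] (c : ι → Set M) : Prop :=
  Nontrivial M ∧
    ∀ φ : (CLOLang ι).Formula Unit, (FmlSet ι M c φ).OrdConnected →
      FmlSet ι M c φ = ∅ ∨ FmlSet ι M c φ = Set.univ

/-- `a ∼ b`: some set definable with parameter `a` is convex, bounded above and
below, and contains both `a` and `b`. -/
def SimRel (ι : Type) {M : Type} [LinearOrder M] (c : ι → Set M) (a b : M) : Prop :=
  ∃ φ : (CLOLang ι).Formula (Unit ⊕ Unit),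
    (Set.OrdConnected {x | Sat M c φ (Sum.elim (fun _ => x) fun _ => a)}) ∧
    (∃ u : M, ∀ z ∈ {x | Sat M c φ (Sum.elim (fun _ => x) fun _ => a)}, z < u) ∧
    (∃ l : M, ∀ z ∈ {x | Sat M c φ (Sum.elim (fun _ => x) fun _ => a)}, l < z) ∧
    a ∈ {x | Sat M c φ (Sum.elim (fun _ => x) fun _ => a)} ∧
    b ∈ {x | Sat M c φ (Sum.elim (fun _ => x) fun _ => a)}

/-- `f : M → N` is an elementary map of CLOs. -/
def IsElemMap (ι : Type) {M N : Type} [LinearOrder M] [LinearOrder N]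
    (cM : ι → Set M) (cN : ι → Set N) (f : M → N) : Prop :=
  ∀ (k : ℕ) (φ : (CLOLang ι).Formula (Fin k)) (v : Fin k → M),
    Sat M cM φ v ↔ Sat N cN φ (f ∘ v)

/-- A subset of a CLO, with its induced structure, is an elementary substructure. -/
def IsElemSubset (ι : Type) (B : Type) [LinearOrder B] (cB : ι → Set B) (s : Set B) : Prop :=
  IsElemMap ι (subColor cB s) cB (Subtype.val : s → B)

/-- A complete `L_κ`-theory is ℵ₀-categorical: any two at-most-countable CLO
models of it are isomorphic.  (Finite and empty models are allowed.) -/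
def Aleph0CatTheory (ι : Type) (T : (CLOLang ι).Theory) : Prop :=
  ∀ (N₁ N₂ : Type) (i₁ : LinearOrder N₁) (i₂ : LinearOrder N₂)
    (c₁ : ι → Set N₁) (c₂ : ι → Set N₂),
    Countable N₁ → Countable N₂ →
    (letI := i₁; CLOTheory ι N₁ c₁) = T → (letI := i₂; CLOTheory ι N₂ c₂) = T →
    (letI := i₁; letI := i₂; CLOIso ι N₁ c₁ N₂ c₂)

/-- `φ` is a convex formula for the complete theory of the CLO `(M₀, c₀)`:
its realizations in every model of that theory form a convex set. -/
def ConvexFml (ι : Type) (M₀ : Type) [LinearOrder M₀] (c₀ : ι → Set M₀)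
    (φ : (CLOLang ι).Formula Unit) : Prop :=
  ∀ (B : Type) (iB : LinearOrder B) (cB : ι → Set B),
    (letI := iB; CLOEquiv ι B cB M₀ c₀) → (letI := iB; Set.OrdConnected (FmlSet ι B cB φ))

/-- The set of common realizations of a set of one-variable formulas in a CLO. -/
def TypeSet (ι : Type) (M : Type) [LinearOrder M] (c : ι → Set M)
    (Φ : Set ((CLOLang ι).Formula Unit)) : Set M :=
  {x | ∀ φ ∈ Φ, Sat M c φ fun _ => x}

/-- A set of one-variable formulas is consistent with the complete theory of
`(M₀, c₀)`: it is realized in some model of that theory. -/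
def TypeConsistent (ι : Type) (M₀ : Type) [LinearOrder M₀] (c₀ : ι → Set M₀)
    (Φ : Set ((CLOLang ι).Formula Unit)) : Prop :=
  ∃ (B : Type) (iB : LinearOrder B) (cB : ι → Set B),
    (letI := iB; CLOEquiv ι B cB M₀ c₀) ∧ (letI := iB; ∃ b : B, b ∈ TypeSet ι B cB Φ)

/-- `Φ` is a convex type of the complete theory of `(M₀, c₀)`: a maximal
consistent set of convex formulas over `∅`.  `IT(T)` is the set of all such. -/
def IsConvexType (ι : Type) (M₀ : Type) [LinearOrder M₀] (c₀ : ι → Set M₀)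
    (Φ : Set ((CLOLang ι).Formula Unit)) : Prop :=
  (∀ φ ∈ Φ, ConvexFml ι M₀ c₀ φ) ∧ TypeConsistent ι M₀ c₀ Φ ∧
    ∀ ψ, ConvexFml ι M₀ c₀ ψ → TypeConsistent ι M₀ c₀ (insert ψ Φ) → ψ ∈ Φ

/-- A convex type is isolated if it contains a convex formula contained in no
other convex type. -/
def IsolatedCT (ι : Type) (M₀ : Type) [LinearOrder M₀] (c₀ : ι → Set M₀)
    (Φ : Set ((CLOLang ι).Formula Unit)) : Prop :=
  ∃ φ ∈ Φ, ConvexFml ι M₀ c₀ φ ∧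
    ∀ Ψ, IsConvexType ι M₀ c₀ Ψ → φ ∈ Ψ → Ψ = Φ

/-- A CLO is ℵ₀-saturated: every finitely-satisfiable set of formulas in one
variable over finitely many parameters is realized. -/
def Aleph0Saturated (ι : Type) (S : Type) [LinearOrder S] (cS : ι → Set S) : Prop :=
  ∀ (m : ℕ) (a : Fin m → S) (p : Set ((CLOLang ι).Formula (Unit ⊕ Fin m))),
    (∀ q : Finset ((CLOLang ι).Formula (Unit ⊕ Fin m)), ↑q ⊆ p →
      ∃ x : S, ∀ φ ∈ q, Sat S cS φ (Sum.elim (fun _ => x) a)) →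
    ∃ x : S, ∀ φ ∈ p, Sat S cS φ (Sum.elim (fun _ => x) a)

/-- A CLO is strongly ℵ₀-homogeneous: finite tuples with the same complete type
are conjugate under an automorphism. -/
def StronglyAleph0Homogeneous (ι : Type) (S : Type) [LinearOrder S] (cS : ι → Set S) : Prop :=
  ∀ (m : ℕ) (a b : Fin m → S),
    (∀ φ : (CLOLang ι).Formula (Fin m), Sat S cS φ a ↔ Sat S cS φ b) →
    ∃ g : S ≃ S, (∀ x y : S, x < y ↔ g x < g y) ∧
      (∀ (k : ι) (x : S), x ∈ cS k ↔ g x ∈ cS k) ∧ ∀ i, g (a i) = b i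

/-- Sufficiently saturated: ℵ₀-saturated and strongly ℵ₀-homogeneous. -/
def SuffSaturated (ι : Type) (S : Type) [LinearOrder S] (cS : ι → Set S) : Prop :=
  Aleph0Saturated ι S cS ∧ StronglyAleph0Homogeneous ι S cS

/-- The complete theory of `(M₀, c₀)` is locally simple: for every sufficiently
saturated model `S` and every convex type `Φ`, the theory `T_Φ = Th(Φ(S))` is
ℵ₀-categorical. -/
def LocallySimple (ι : Type) (M₀ : Type) [LinearOrder M₀] (c₀ : ι → Set M₀) : Prop :=
  ∀ (S : Type) [LinearOrder S], ∀ (cS : ι → Set S),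
    CLOEquiv ι S cS M₀ c₀ → SuffSaturated ι S cS →
    ∀ Φ, IsConvexType ι M₀ c₀ Φ →
      Aleph0CatTheory ι
        (CLOTheory ι (TypeSet ι S cS Φ) (subColor cS (TypeSet ι S cS Φ)))

/-- A finite set of pairs is a partial isomorphism of CLOs: it preserves `<`,
equality, and each color, in both directions. -/
def IsPartialIso (ι : Type) {M N : Type} [LinearOrder M] [LinearOrder N]
    (cM : ι → Set M) (cN : ι → Set N) (f : Finset (M × N)) : Prop :=
  ∀ p ∈ f, ∀ q ∈ f,
    (p.1 < q.1 ↔ p.2 < q.2) ∧ (p.1 = q.1 ↔ p.2 = q.2) ∧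
    ∀ k, p.1 ∈ cM k ↔ p.2 ∈ cN k

/-- Back-and-forth equivalence of CLOs: a nonempty family of finite partial
isomorphisms with the back-and-forth extension properties. -/
def BackForthEquiv (ι : Type) (M : Type) [LinearOrder M] (cM : ι → Set M)
    (N : Type) [LinearOrder N] (cN : ι → Set N) : Prop :=
  ∃ F : Set (Finset (M × N)), F.Nonempty ∧ (∀ f ∈ F, IsPartialIso ι cM cN f) ∧
    (∀ f ∈ F, ∀ m : M, ∃ g ∈ F, f ⊆ g ∧ ∃ n : N, (m, n) ∈ g) ∧
    (∀ f ∈ F, ∀ n : N, ∃ g ∈ F, f ⊆ g ∧ ∃ m : M, (m, n) ∈ g)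

/-- The set of complete theories `Th(Φ(A))` as `A` ranges over models of the
complete theory of `(M₀, c₀)` (including the theory of the empty structure,
in case `Φ` is omitted). -/
def TheoriesAt (ι : Type) (M₀ : Type) [LinearOrder M₀] (c₀ : ι → Set M₀)
    (Φ : Set ((CLOLang ι).Formula Unit)) : Set ((CLOLang ι).Theory) :=
  {T | ∃ (A : Type) (iA : LinearOrder A) (cA : ι → Set A),
    (letI := iA; CLOEquiv ι A cA M₀ c₀) ∧
    T = (letI := iA; CLOTheory ι (TypeSet ι A cA Φ) (subColor cA (TypeSet ι A cA Φ)))}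

section SatLemmas

variable {ι : Type} {M : Type} [LinearOrder M] {c : ι → Set M} {α β : Type}

/-- The formula `x i < x j`. -/
def ltFml (ι : Type) {α : Type} (i j : α) : (CLOLang ι).Formula α :=
  Relations.formula₂ (L := CLOLang ι) (CLORel.lt : CLORel ι 2) (Term.var i) (Term.var j)

/-- The formula `x i = x j`. -/
def eqFml (ι : Type) {α : Type} (i j : α) : (CLOLang ι).Formula α :=
  Term.equal (Term.var i) (Term.var j)

/-- The formula stating that `x i` has color `k`. -/
def colorFml {ι : Type} {α : Type} (k : ι) (i : α) : (CLOLang ι).Formula α :=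
  Relations.formula₁ (L := CLOLang ι) (CLORel.color k : CLORel ι 1) (Term.var i)

lemma sat_ltFml {i j : α} {v : α → M} : Sat M c (ltFml ι i j) v ↔ v i < v j := by
  let _ := CLOStr ι M c
  exact Formula.realize_rel₂

lemma sat_eqFml {i j : α} {v : α → M} : Sat M c (eqFml ι i j) v ↔ v i = v j := by
  let _ := CLOStr ι M c
  exact Formula.realize_equal

lemma sat_colorFml {k : ι} {i : α} {v : α → M} : Sat M c (colorFml k i) v ↔ v i ∈ c k := by
  let _ := CLOStr ι M c
  exact Formula.realize_rel₁

lemma sat_relabel {φ : (CLOLang ι).Formula α} {g : α → β} {v : β → M} :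
    Sat M c (φ.relabel g) v ↔ Sat M c φ (v ∘ g) := by
  let _ := CLOStr ι M c
  exact Formula.realize_relabel

lemma sat_not {φ : (CLOLang ι).Formula α} {v : α → M} :
    Sat M c (Formula.not φ) v ↔ ¬ Sat M c φ v := by
  let _ := CLOStr ι M c
  exact Formula.realize_not

lemma sat_inf {φ ψ : (CLOLang ι).Formula α} {v : α → M} :
    Sat M c (φ ⊓ ψ) v ↔ Sat M c φ v ∧ Sat M c ψ v := by
  let _ := CLOStr ι M c
  exact Formula.realize_inf

lemma sat_iExs [Finite β] {φ : (CLOLang ι).Formula (α ⊕ β)} {v : α → M} :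
    Sat M c (φ.iExs β) v ↔ ∃ w : β → M, Sat M c φ (Sum.elim v w) := by
  let _ := CLOStr ι M c
  exact Formula.realize_iExs

lemma sat_iInf [Finite β] {f : β → (CLOLang ι).Formula α} {v : α → M} :
    Sat M c (Formula.iInf f) v ↔ ∀ b, Sat M c (f b) v := by
  let _ := CLOStr ι M c
  exact Formula.realize_iInf

/-- The formula stating that some `x` satisfies all formulas of a finite set. -/
noncomputable def exConj (q : Finset ((CLOLang ι).Formula (Unit ⊕ β))) : (CLOLang ι).Formula β :=
  Formula.iExs Unit ((Formula.iInf fun φ : q => φ.1).relabel Sum.swap)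

lemma sat_exConj {q : Finset ((CLOLang ι).Formula (Unit ⊕ β))} {v : β → M} :
    Sat M c (exConj q) v ↔ ∃ x, ∀ φ ∈ q, Sat M c φ (Sum.elim (fun _ => x) v) := by
  have h : ∀ w : Unit → M, Sum.elim v w ∘ Sum.swap = Sum.elim w v := by
    intro w; funext i; cases i <;> rfl
  simp only [exConj, sat_iExs, sat_relabel, sat_iInf, h, Subtype.forall]
  exact ⟨fun ⟨w, hw⟩ => ⟨w (), hw⟩, fun ⟨x, hx⟩ => ⟨fun _ => x, hx⟩⟩

/-- The convex hull of a formula. -/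
noncomputable def hullFml (φ : (CLOLang ι).Formula Unit) : (CLOLang ι).Formula Unit :=
  Formula.iExs Bool
    (φ.relabel (fun _ => Sum.inr false) ⊓ φ.relabel (fun _ => Sum.inr true) ⊓
      Formula.not (ltFml ι (Sum.inl ()) (Sum.inr false)) ⊓
      Formula.not (ltFml ι (Sum.inr true) (Sum.inl ())))

lemma mem_fmlSet_hullFml {φ : (CLOLang ι).Formula Unit} {x : M} :
    x ∈ FmlSet ι M c (hullFml φ) ↔
      ∃ y ∈ FmlSet ι M c φ, ∃ z ∈ FmlSet ι M c φ, y ≤ x ∧ x ≤ z := by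
  change Sat M c (hullFml φ) (fun _ => x) ↔
    ∃ y, Sat M c φ (fun _ => y) ∧ ∃ z, Sat M c φ (fun _ => z) ∧ y ≤ x ∧ x ≤ z
  simp only [hullFml, sat_iExs, sat_inf, sat_relabel, sat_not, sat_ltFml, not_lt]
  constructor
  · rintro ⟨w, ⟨⟨h1, h2⟩, h3⟩, h4⟩
    exact ⟨w false, h1, w true, h2, h3, h4⟩
  · rintro ⟨y, h1, z, h2, h3, h4⟩
    exact ⟨fun b => bif b then z else y, ⟨⟨h1, h2⟩, h3⟩, h4⟩

lemma ordConnected_hullFml (φ : (CLOLang ι).Formula Unit) :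
    (FmlSet ι M c (hullFml φ)).OrdConnected := by
  refine ⟨fun a ha b hb x hx => ?_⟩
  rw [mem_fmlSet_hullFml] at *
  obtain ⟨y, hy, -, -, hya, -⟩ := ha
  obtain ⟨-, -, z, hz, -, hbz⟩ := hb
  exact ⟨y, hy, z, hz, hya.trans hx.1, hx.2.trans hbz⟩

lemma sat_iff_of_cloEquiv {N : Type} [LinearOrder N] {cN : ι → Set N}
    (h : CLOEquiv ι M c N cN) (φ : (CLOLang ι).Formula Empty) :
    Sat M c φ Empty.elim ↔ Sat N cN φ Empty.elim := by
  let _ := CLOStr ι M c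
  let _ := CLOStr ι N cN
  have := ElementarilyEquivalent.realize_sentence h φ
  rw [Subsingleton.elim (Empty.elim : Empty → M) default,
    Subsingleton.elim (Empty.elim : Empty → N) default]
  exact this

/-- A finite set of one-variable formulas satisfiable in a CLO is satisfiable in every elementarily
equivalent one. -/
lemma exists_sat_of_cloEquiv {N : Type} [LinearOrder N] {cN : ι → Set N}
    (h : CLOEquiv ι M c N cN) (q : Finset ((CLOLang ι).Formula Unit)) {x : M}
    (hx : ∀ φ ∈ q, Sat M c φ fun _ => x) : ∃ y : N, ∀ φ ∈ q, Sat N cN φ fun _ => y := by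
  classical
  let q' : Finset ((CLOLang ι).Formula (Unit ⊕ Empty)) := q.image (Formula.relabel Sum.inl)
  have key := sat_iff_of_cloEquiv h (exConj q')
  simp only [sat_exConj, q', Finset.forall_mem_image, sat_relabel] at key
  exact key.1 ⟨x, hx⟩

end SatLemmas

section Countability

variable {ι : Type} [Countable ι]

lemma card_cloLang_le : (CLOLang ι).card ≤ Cardinal.aleph0 := by
  have h : Countable (Σ n, CLORel ι n) := by
    have : Function.Surjective (fun o : Option ι => (match o with
        | none => ⟨2, CLORel.lt⟩
        | some i => ⟨1, CLORel.color i⟩ : Σ n, CLORel ι n)) := by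
      rintro ⟨_, _ | i⟩
      · exact ⟨none, rfl⟩
      · exact ⟨some i, rfl⟩
    exact this.countable
  have h1 : Countable (Σ n, (CLOLang ι).Functions n) :=
    ⟨⟨fun x => Empty.elim x.2, fun x => Empty.elim x.2⟩⟩
  have h2 : Countable (Σ n, (CLOLang ι).Relations n) := h
  exact Cardinal.mk_le_aleph0_iff.2 (inferInstanceAs (Countable (_ ⊕ _)))

instance countable_formula {α : Type} [Countable α] : Countable ((CLOLang ι).Formula α) := by
  have h : Countable (Σ n, (CLOLang ι).BoundedFormula α n) := by
    rw [← Cardinal.mk_le_aleph0_iff]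
    refine BoundedFormula.card_le.trans (max_le le_rfl ?_)
    simp only [Cardinal.lift_id]
    exact Cardinal.add_le_aleph0.2 ⟨Cardinal.mk_le_aleph0, card_cloLang_le⟩
  exact Function.Injective.countable
    (f := fun φ => (⟨0, φ⟩ : Σ n, (CLOLang ι).BoundedFormula α n))
    fun φ ψ h => by simpa using h

end Countability

section Saturation

/-- Any structure elementarily equivalent to a CLO is a CLO. -/
lemma exists_cloStr_eq {ι M N : Type} [LinearOrder M] (c : ι → Set M)
    [inst : (CLOLang ι).Structure N]
    (h : let _ := CLOStr ι M c; N ≅[CLOLang ι] M) :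
    ∃ (_ : LinearOrder N) (cN : ι → Set N), CLOStr ι N cN = inst := by
  classical
  let _ := CLOStr ι M c
  let r : (CLOLang ι).Relations 2 := (CLORel.lt : CLORel ι 2)
  have hirr : N ⊨ r.irreflexive := (h.realize_sentence _).2 <| Relations.realize_irreflexive.2
    ⟨fun x => lt_irrefl x⟩
  have htrans : N ⊨ r.transitive := (h.realize_sentence _).2 <| Relations.realize_transitive.2
    ⟨fun x y z (hxy : x < y) (hyz : y < z) => hxy.trans hyz⟩
  let χ : (CLOLang ι).Sentence := Formula.not <| Formula.iExs (α := Empty) (Fin 2)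
    (Formula.not (Relations.formula₂ r (Term.var (Sum.inr 0)) (Term.var (Sum.inr 1))) ⊓
      Formula.not (Relations.formula₂ r (Term.var (Sum.inr 1)) (Term.var (Sum.inr 0))) ⊓
      Formula.not (Term.equal (Term.var (Sum.inr 0)) (Term.var (Sum.inr 1))))
  have hχ : ∀ (K : Type) [(CLOLang ι).Structure K], K ⊨ χ ↔
      ∀ x y : K, ¬ Structure.RelMap r ![x, y] → ¬ Structure.RelMap r ![y, x] → x = y := by
    intro K _
    simp only [χ, Sentence.Realize, Formula.realize_not, Formula.realize_iExs,
      Formula.realize_inf, Formula.realize_rel₂, Formula.realize_equal, Term.realize_var,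
      Sum.elim_inr, not_exists, not_and, not_not, and_imp]
    exact ⟨fun H x y => by simpa using H ![x, y], fun H w => H (w 0) (w 1)⟩
  have htri := (hχ N).1 <| (h.realize_sentence χ).2 <| (hχ M).2 fun x y hxy hyx =>
    le_antisymm (not_lt.1 hyx) (not_lt.1 hxy)
  have h1 := Relations.realize_irreflexive.1 hirr
  have h2 := Relations.realize_transitive.1 htrans
  have h3 : Std.Trichotomous (fun x y : N => Structure.RelMap r ![x, y]) := ⟨htri⟩
  have h4 : IsStrictOrder N (fun x y : N => Structure.RelMap r ![x, y]) := {}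
  have h5 : IsStrictTotalOrder N (fun x y : N => Structure.RelMap r ![x, y]) := {}
  let iN : LinearOrder N := linearOrderOfSTO (fun x y : N => Structure.RelMap r ![x, y])
  refine ⟨iN, fun k => {x | Structure.RelMap
    (L := CLOLang ι) (CLORel.color k : CLORel ι 1) ![x]}, ?_⟩
  ext n f
  · exact Empty.elim f
  · rename_i v
    cases f with
    | lt =>
      change Structure.RelMap r ![v 0, v 1] ↔ Structure.RelMap r v
      rw [List.ofFn_inj.1 (show List.ofFn ![v 0, v 1] = List.ofFn v by simp)]
    | color k =>
      change Structure.RelMap (L := CLOLang ι) (CLORel.color k : CLORel ι 1) ![v 0] ↔ _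
      rw [List.ofFn_inj.1 (show List.ofFn ![v 0] = List.ofFn v by simp)]

lemma sat_iff_of_cloStr_eq {ι N α : Type} [LinearOrder N] {cN : ι → Set N}
    [inst : (CLOLang ι).Structure N] (h : CLOStr ι N cN = inst)
    {φ : (CLOLang ι).Formula α} {v : α → N} : Sat N cN φ v ↔ φ.Realize v := by
  subst h
  rfl

lemma cloEquiv_of_cloStr_eq {ι M N : Type} [LinearOrder M] {c : ι → Set M} [LinearOrder N]
    {cN : ι → Set N} [inst : (CLOLang ι).Structure N] (h : CLOStr ι N cN = inst)
    (hNM : let _ := CLOStr ι M c; N ≅[CLOLang ι] M) : CLOEquiv ι N cN M c := by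
  subst h
  exact hNM

/-- Nonprincipal ultrapowers over `ℕ` realize countable types over arbitrary parameters. -/
lemma exists_realize_ultrapower {L : FirstOrder.Language.{0, 0}} {M β : Type} [L.Structure M] [Nonempty M]
    (a : β → (Filter.hyperfilter ℕ : Filter ℕ).Product fun _ => M)
    (p : Set (L.Formula (Unit ⊕ β))) (hp : p.Countable)
    (hfin : ∀ q : Finset (L.Formula (Unit ⊕ β)), ↑q ⊆ p →
      ∃ x, ∀ φ ∈ q, φ.Realize (Sum.elim (fun _ => x) a)) :
    ∃ x, ∀ φ ∈ p, φ.Realize (Sum.elim (fun _ => x) a) := by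
  classical
  obtain rfl | hne := p.eq_empty_or_nonempty
  · obtain ⟨x, -⟩ := hfin ∅ (by simp)
    exact ⟨x, by simp⟩
  obtain ⟨f, rfl⟩ := hp.exists_eq_range hne
  choose A hA using fun j => Quotient.exists_rep (a j)
  have los : ∀ (φ : L.Formula (Unit ⊕ β)) (X : ℕ → M),
      φ.Realize (Sum.elim (fun _ => (Quotient.mk _ X :
        (Filter.hyperfilter ℕ : Filter ℕ).Product fun _ => M)) a) ↔
      ∀ᶠ i in Filter.hyperfilter ℕ, φ.Realize (Sum.elim (fun _ => X i) fun j => A j i) := by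
    intro φ X
    have key := Ultraproduct.realize_formula_cast (u := Filter.hyperfilter ℕ)
      (M := fun _ => M) φ (Sum.elim (fun _ => X) A)
    convert key using 2
    · funext j
      cases j
      · rfl
      · exact (hA _).symm
    · congr! 2 with i
      funext j
      cases j <;> rfl
  let G : ℕ → ℕ → Prop := fun n i =>
    ∃ x, ∀ k < n, (f k).Realize (Sum.elim (fun _ => x) fun j => A j i)
  have hG0 : ∀ i, G 0 i := fun i => ⟨Classical.arbitrary M, by simp⟩
  have hG : ∀ n, ∀ᶠ i in Filter.hyperfilter ℕ, G n i := by
    intro n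
    obtain ⟨x, hx⟩ := hfin ((Finset.range n).image f) (by simp [Set.image_subset_iff])
    obtain ⟨X, rfl⟩ := Quotient.exists_rep x
    have : ∀ᶠ i in Filter.hyperfilter ℕ, ∀ k ∈ Finset.range n,
        (f k).Realize (Sum.elim (fun _ => X i) fun j => A j i) := by
      rw [Filter.eventually_all_finset]
      exact fun k hk => (los _ _).1 (hx _ (Finset.mem_image_of_mem f hk))
    exact this.mono fun i hi => ⟨X i, fun k hk => hi k (Finset.mem_range.2 hk)⟩
  choose X hX using fun i => Nat.findGreatest_spec (P := fun n => G n i) (Nat.zero_le i) (hG0 i)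
  refine ⟨Quotient.mk _ X, ?_⟩
  rintro _ ⟨k, rfl⟩
  refine (los _ _).2 ?_
  have hge : ∀ᶠ i in Filter.hyperfilter ℕ, k + 1 ≤ i :=
    Nat.hyperfilter_le_atTop (Filter.eventually_ge_atTop (k + 1))
  filter_upwards [hG (k + 1), hge] with i hi hki
  exact hX i k (Nat.le_findGreatest hki hi)

lemma exists_aleph0Saturated {ι M : Type} [Countable ι] [LinearOrder M] [Nonempty M]
    (c : ι → Set M) :
    ∃ (S : Type) (_ : LinearOrder S) (cS : ι → Set S),
      CLOEquiv ι S cS M c ∧ Aleph0Saturated ι S cS := by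
  let _ := CLOStr ι M c
  have hequiv : ((Filter.hyperfilter ℕ : Filter ℕ).Product fun _ => M) ≅[CLOLang ι] M := by
    rw [elementarilyEquivalent_iff]
    intro φ
    rw [Ultraproduct.sentence_realize]
    simp
  obtain ⟨iS, cS, hS⟩ := exists_cloStr_eq c hequiv
  refine ⟨_, iS, cS, cloEquiv_of_cloStr_eq hS hequiv, fun m a p hp => ?_⟩
  simp only [sat_iff_of_cloStr_eq hS] at hp ⊢
  exact exists_realize_ultrapower a p (Set.to_countable p) hp

end Saturation

section Swap

variable {ι S : Type} [LinearOrder S] {cS : ι → Set S} {J : Type}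

/-- Two tuples agree outside `C`, and their parts inside `C` have the same complete type. -/
def SwapEquiv (ι : Type) {S : Type} [LinearOrder S] (cS : ι → Set S) (C : Set S) {J : Type}
    (w w' : J → S) : Prop :=
  ∃ (m : ℕ) (d d' : Fin m → S), (∀ i, d i ∈ C) ∧ (∀ i, d' i ∈ C) ∧
    (∀ φ : (CLOLang ι).Formula (Fin m), Sat S cS φ d ↔ Sat S cS φ d') ∧
    ∀ j, (∃ i, w j = d i ∧ w' j = d' i) ∨ (w j ∉ C ∧ w' j = w j)

lemma SwapEquiv.symm {C : Set S} {w w' : J → S} (h : SwapEquiv ι cS C w w') :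
    SwapEquiv ι cS C w' w := by
  obtain ⟨m, d, d', hd, hd', hT, hw⟩ := h
  refine ⟨m, d', d, hd', hd, fun φ => (hT φ).symm, fun j => ?_⟩
  obtain ⟨i, h1, h2⟩ | ⟨h1, h2⟩ := hw j
  · exact Or.inl ⟨i, h2, h1⟩
  · exact Or.inr ⟨h2 ▸ h1, h2.symm⟩

lemma SwapEquiv.eq_iff {C : Set S} {w w' : J → S} (h : SwapEquiv ι cS C w w') (j k : J) :
    w j = w k ↔ w' j = w' k := by
  obtain ⟨m, d, d', hd, hd', hT, hw⟩ := h
  obtain ⟨i, h1, h2⟩ | ⟨h1, h2⟩ := hw j <;> obtain ⟨l, h3, h4⟩ | ⟨h3, h4⟩ := hw k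
  · rw [h1, h2, h3, h4]
    simpa only [sat_eqFml] using hT (eqFml ι i l)
  · rw [h4, h1, h2]
    exact iff_of_false (fun e => h3 (e ▸ hd i)) (fun e => h3 (e ▸ hd' i))
  · rw [h2, h3, h4]
    exact iff_of_false (fun e => h1 (e ▸ hd l)) (fun e => h1 (e ▸ hd' l))
  · rw [h2, h4]

lemma SwapEquiv.lt_iff {C : Set S} (hC : C.OrdConnected) {w w' : J → S}
    (h : SwapEquiv ι cS C w w') (j k : J) : w j < w k ↔ w' j < w' k := by
  have key : ∀ x ∈ C, ∀ y ∈ C, ∀ z ∉ C, (x < z → y < z) ∧ (z < x → z < y) := by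
    intro x hx y hy z hz
    refine ⟨fun hxz => ?_, fun hzx => ?_⟩ <;> by_contra! hcon
    · exact hz (hC.out hx hy ⟨hxz.le, hcon⟩)
    · exact hz (hC.out hy hx ⟨hcon, hzx.le⟩)
  obtain ⟨m, d, d', hd, hd', hT, hw⟩ := h
  obtain ⟨i, h1, h2⟩ | ⟨h1, h2⟩ := hw j <;> obtain ⟨l, h3, h4⟩ | ⟨h3, h4⟩ := hw k
  · rw [h1, h2, h3, h4]
    simpa only [sat_ltFml] using hT (ltFml ι i l)
  · rw [h4, h1, h2]
    exact ⟨(key _ (hd i) _ (hd' i) _ h3).1, (key _ (hd' i) _ (hd i) _ h3).1⟩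
  · rw [h2, h3, h4]
    exact ⟨(key _ (hd l) _ (hd' l) _ h1).2, (key _ (hd' l) _ (hd l) _ h1).2⟩
  · rw [h2, h4]

lemma SwapEquiv.color_iff {C : Set S} {w w' : J → S} (h : SwapEquiv ι cS C w w') (k : ι) (j : J) :
    w j ∈ cS k ↔ w' j ∈ cS k := by
  obtain ⟨m, d, d', hd, hd', hT, hw⟩ := h
  obtain ⟨i, h1, h2⟩ | ⟨h1, h2⟩ := hw j
  · rw [h1, h2]
    simpa only [sat_colorFml] using hT (colorFml k i)
  · rw [h2]

/-- Tuples of the same type in an `ℵ₀`-saturated CLO have the same one-point extensions. -/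
lemma Aleph0Saturated.exists_extension (hS : Aleph0Saturated ι S cS) {m : ℕ} {d d' : Fin m → S}
    (hT : ∀ φ : (CLOLang ι).Formula (Fin m), Sat S cS φ d ↔ Sat S cS φ d') (x : S) :
    ∃ x', ∀ φ : (CLOLang ι).Formula (Unit ⊕ Fin m),
      Sat S cS φ (Sum.elim (fun _ => x) d) ↔ Sat S cS φ (Sum.elim (fun _ => x') d') := by
  obtain ⟨x', hx'⟩ := hS m d' {φ | Sat S cS φ (Sum.elim (fun _ => x) d)} fun q hq =>
    sat_exConj.1 <| (hT _).1 <| sat_exConj.2 ⟨x, fun φ hφ => hq hφ⟩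
  refine ⟨x', fun φ => ⟨fun h => hx' φ h, fun h => ?_⟩⟩
  by_contra hcon
  exact sat_not.1 (hx' (Formula.not φ) (sat_not.2 hcon)) h

lemma SwapEquiv.exists_snoc (hS : Aleph0Saturated ι S cS) {Φ : Set ((CLOLang ι).Formula Unit)}
    {α : Type} {n : ℕ} {v v' : α → S} {xs xs' : Fin n → S}
    (h : SwapEquiv ι cS (TypeSet ι S cS Φ) (Sum.elim v xs) (Sum.elim v' xs')) (x : S) :
    ∃ x', SwapEquiv ι cS (TypeSet ι S cS Φ) (Sum.elim v (Fin.snoc xs x : Fin (n + 1) → S))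
      (Sum.elim v' (Fin.snoc xs' x' : Fin (n + 1) → S)) := by
  obtain ⟨m, d, d', hd, hd', hT, hw⟩ := h
  by_cases hx : x ∈ TypeSet ι S cS Φ
  · obtain ⟨x', hx'⟩ := hS.exists_extension hT x
    have hxC : x' ∈ TypeSet ι S cS Φ := fun φ hφ => by
      have := hx' (φ.relabel fun _ => Sum.inl ())
      simp only [sat_relabel] at this
      exact this.1 (hx φ hφ)
    have hcons : ∀ (y : S) (e : Fin m → S), (Fin.cons y e : Fin (m + 1) → S) =
        Sum.elim (fun _ => y) e ∘ (Fin.cases (Sum.inl ()) Sum.inr : Fin (m + 1) → Unit ⊕ Fin m) := by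
      intro y e
      funext i
      refine Fin.cases rfl (fun i => rfl) i
    refine ⟨x', m + 1, Fin.cons x d, Fin.cons x' d', Fin.cases hx hd, Fin.cases hxC hd',
      fun φ => ?_, ?_⟩
    · rw [hcons, hcons, ← sat_relabel, ← sat_relabel]
      exact hx' _
    · have old : ∀ j, (∃ i, Sum.elim v xs j = (Fin.cons x d : Fin (m + 1) → S) i ∧
          Sum.elim v' xs' j = (Fin.cons x' d' : Fin (m + 1) → S) i) ∨
          (Sum.elim v xs j ∉ TypeSet ι S cS Φ ∧ Sum.elim v' xs' j = Sum.elim v xs j) :=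
        fun j => (hw j).imp_left fun ⟨i, h1, h2⟩ => ⟨i.succ, by simpa using h1, by simpa using h2⟩
      rintro (j | j)
      · exact old (Sum.inl j)
      · induction j using Fin.lastCases with
        | last => exact Or.inl ⟨0, by simp, by simp⟩
        | cast j => simpa using old (Sum.inr j)
  · refine ⟨x, m, d, d', hd, hd', hT, ?_⟩
    rintro (j | j)
    · exact hw (Sum.inl j)
    · induction j using Fin.lastCases with
      | last => exact Or.inr (by simpa using hx)
      | cast j => simpa using hw (Sum.inr j)

lemma SwapEquiv.realize_iff (hS : Aleph0Saturated ι S cS) {Φ : Set ((CLOLang ι).Formula Unit)}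
    (hC : (TypeSet ι S cS Φ).OrdConnected) {α : Type} {n : ℕ}
    (φ : (CLOLang ι).BoundedFormula α n) {v v' : α → S} {xs xs' : Fin n → S}
    (h : SwapEquiv ι cS (TypeSet ι S cS Φ) (Sum.elim v xs) (Sum.elim v' xs')) :
    let _ := CLOStr ι S cS
    φ.Realize v xs ↔ φ.Realize v' xs' := by
  intro _
  induction φ with
  | falsum => exact Iff.rfl
  | equal t₁ t₂ =>
    rcases t₁ with j | f
    · rcases t₂ with k | f
      · exact h.eq_iff j k
      · exact Empty.elim f
    · exact Empty.elim f
  | rel R ts =>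
    have hts : ∀ i, ∃ j, ts i = Term.var j := by
      intro i
      rcases ts i with j | f
      · exact ⟨j, rfl⟩
      · exact Empty.elim f
    choose g hg using hts
    obtain rfl : ts = fun i => Term.var (g i) := funext hg
    cases R with
    | lt => exact h.lt_iff hC (g 0) (g 1)
    | color k => exact h.color_iff k (g 0)
  | imp φ ψ ihφ ihψ => exact imp_congr (ihφ h) (ihψ h)
  | all φ ih =>
    refine ⟨fun H x' => ?_, fun H x => ?_⟩
    · obtain ⟨x, hx⟩ := h.symm.exists_snoc hS x'
      exact (ih hx.symm).1 (H x)
    · obtain ⟨y, hx⟩ := h.exists_snoc hS x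
      exact (ih hx).2 (H y)

/-- Points of `Φ(S)` with the same type have the same type over parameters outside `Φ(S)`. -/
lemma sat_iff_of_same_type (hS : Aleph0Saturated ι S cS) {Φ : Set ((CLOLang ι).Formula Unit)}
    (hC : (TypeSet ι S cS Φ).OrdConnected) {m : ℕ} {a : Fin m → S}
    (ha : ∀ i, a i ∉ TypeSet ι S cS Φ) {b b' : S} (hb : b ∈ TypeSet ι S cS Φ)
    (hbb' : ∀ φ : (CLOLang ι).Formula Unit, Sat S cS φ (fun _ => b) → Sat S cS φ fun _ => b')
    (θ : (CLOLang ι).Formula (Unit ⊕ Fin m)) :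
    Sat S cS θ (Sum.elim (fun _ => b) a) ↔ Sat S cS θ (Sum.elim (fun _ => b') a) := by
  refine SwapEquiv.realize_iff hS hC θ
    ⟨1, fun _ => b, fun _ => b', fun _ => hb, fun _ φ hφ => hbb' φ (hb φ hφ), fun φ => ?_, ?_⟩
  · have hpos : ∀ ψ : (CLOLang ι).Formula (Fin 1),
        Sat S cS ψ (fun _ => b) → Sat S cS ψ fun _ => b' := fun ψ hψ =>
      sat_relabel.1 (hbb' (ψ.relabel fun _ => ()) (sat_relabel.2 hψ))
    refine ⟨hpos φ, fun h => ?_⟩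
    by_contra hcon
    exact sat_not.1 (hpos (Formula.not φ) (sat_not.2 hcon)) h
  · rintro ((j | j) | j)
    · exact Or.inl ⟨0, rfl, rfl⟩
    · exact Or.inr ⟨ha j, rfl⟩
    · exact j.elim0

end Swap

section ConvexTypes

variable {ι M₀ S : Type} [LinearOrder M₀] {c₀ : ι → Set M₀} [LinearOrder S] {cS : ι → Set S}
  {Φ Ψ : Set ((CLOLang ι).Formula Unit)}

lemma IsConvexType.ordConnected_typeSet (hE : CLOEquiv ι S cS M₀ c₀)
    (hΦ : IsConvexType ι M₀ c₀ Φ) : (TypeSet ι S cS Φ).OrdConnected :=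
  ⟨fun _ ha _ hb _ hx φ hφ => (hΦ.1 φ hφ S _ cS hE).out (ha φ hφ) (hb φ hφ) hx⟩

lemma IsConvexType.subset_of_mem (hE : CLOEquiv ι S cS M₀ c₀) (hΦ : IsConvexType ι M₀ c₀ Φ)
    (hΨ : IsConvexType ι M₀ c₀ Ψ) {x : S} (hx : x ∈ TypeSet ι S cS Φ)
    (hx' : x ∈ TypeSet ι S cS Ψ) : Ψ ⊆ Φ := fun ψ hψ => by
  refine hΦ.2.2 ψ (hΨ.1 ψ hψ) ⟨S, _, cS, hE, x, fun φ hφ => ?_⟩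
  obtain rfl | hφ := hφ
  · exact hx' _ hψ
  · exact hx φ hφ

lemma IsConvexType.eq_of_mem (hE : CLOEquiv ι S cS M₀ c₀) (hΦ : IsConvexType ι M₀ c₀ Φ)
    (hΨ : IsConvexType ι M₀ c₀ Ψ) {x : S} (hx : x ∈ TypeSet ι S cS Φ)
    (hx' : x ∈ TypeSet ι S cS Ψ) : Ψ = Φ :=
  (hΦ.subset_of_mem hE hΨ hx hx').antisymm (hΨ.subset_of_mem hE hΦ hx' hx)

lemma Aleph0Saturated.exists_mem_typeSet (hS : Aleph0Saturated ι S cS)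
    (hE : CLOEquiv ι S cS M₀ c₀) (hΦ : IsConvexType ι M₀ c₀ Φ) : (TypeSet ι S cS Φ).Nonempty := by
  classical
  obtain ⟨B, iB, cB, hB, b, hb⟩ := hΦ.2.1
  have hBS : CLOEquiv ι B cB S cS := by
    let _ := CLOStr ι B cB
    let _ := CLOStr ι S cS
    let _ := CLOStr ι M₀ c₀
    exact ElementarilyEquivalent.trans hB (ElementarilyEquivalent.symm hE)
  obtain ⟨x, hx⟩ := hS 0 Fin.elim0 (Formula.relabel Sum.inl '' Φ) (fun q hq => by
    obtain ⟨q', hq', rfl⟩ := Finset.subset_set_image_iff.1 hq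
    obtain ⟨y, hy⟩ := exists_sat_of_cloEquiv hBS q' fun φ hφ => hb φ (hq' hφ)
    refine ⟨y, ?_⟩
    simp only [Finset.forall_mem_image, sat_relabel]
    exact hy)
  exact ⟨x, fun φ hφ => sat_relabel.1 (hx _ ⟨φ, hφ, rfl⟩)⟩

/-- A nonisolated convex type stays nonisolated over parameters outside of it. -/
lemma exists_sat_notMem_typeSet (hS : Aleph0Saturated ι S cS) (hE : CLOEquiv ι S cS M₀ c₀)
    (hΦ : IsConvexType ι M₀ c₀ Φ) (hni : ¬ IsolatedCT ι M₀ c₀ Φ) {m : ℕ} {a : Fin m → S}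
    (ha : ∀ i, a i ∉ TypeSet ι S cS Φ) {θ : (CLOLang ι).Formula (Unit ⊕ Fin m)} {b : S}
    (hb : Sat S cS θ (Sum.elim (fun _ => b) a)) :
    ∃ b', Sat S cS θ (Sum.elim (fun _ => b') a) ∧ b' ∉ TypeSet ι S cS Φ := by
  classical
  by_contra! hcon
  have hbC := hcon b hb
  have hC := hΦ.ordConnected_typeSet hE
  obtain ⟨φ, hφb, hφ⟩ : ∃ φ : (CLOLang ι).Formula Unit, Sat S cS φ (fun _ => b) ∧
      ∀ x, Sat S cS φ (fun _ => x) → Sat S cS θ (Sum.elim (fun _ => x) a) := by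
    by_contra! hno
    obtain ⟨b', hb'⟩ := hS m a
      ((fun φ => Formula.relabel Sum.inl φ ⊓ Formula.not θ) '' {φ | Sat S cS φ fun _ => b})
      (fun q hq => by
        obtain ⟨q', hq', rfl⟩ := Finset.subset_set_image_iff.1 hq
        obtain ⟨x, hx, hxθ⟩ := hno (Formula.iInf fun φ : q' => φ.1)
          (sat_iInf.2 fun φ => hq' φ.2)
        refine ⟨x, ?_⟩
        simp only [Finset.forall_mem_image, sat_inf, sat_relabel, sat_not]
        exact fun φ hφ => ⟨sat_iInf.1 hx ⟨φ, hφ⟩, hxθ⟩)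
    have hb'' : ∀ φ : (CLOLang ι).Formula Unit, Sat S cS φ (fun _ => b) →
        Sat S cS φ (fun _ => b') ∧ ¬ Sat S cS θ (Sum.elim (fun _ => b') a) := by
      intro φ hφ
      have := hb' _ ⟨φ, hφ, rfl⟩
      simp only [sat_inf, sat_relabel, sat_not] at this
      exact this
    refine (hb'' (eqFml ι () ()) (sat_eqFml.2 rfl)).2 ?_
    exact (sat_iff_of_same_type hS hC ha hbC (fun φ h => (hb'' φ h).1) θ).1 hb
  have hconv : ConvexFml ι M₀ c₀ (hullFml φ) := fun B iB cB _ => ordConnected_hullFml φ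
  have hbhull : b ∈ FmlSet ι S cS (hullFml φ) :=
    mem_fmlSet_hullFml.2 ⟨b, hφb, b, hφb, le_rfl, le_rfl⟩
  refine hni ⟨hullFml φ, hΦ.2.2 _ hconv ⟨S, _, cS, hE, b, fun ψ hψ => ?_⟩, hconv, fun Ψ hΨ hφΨ => ?_⟩
  · obtain rfl | hψ := hψ
    · exact hbhull
    · exact hbC ψ hψ
  · obtain ⟨x, hx⟩ := hS.exists_mem_typeSet hE hΨ
    obtain ⟨y, hy, z, hz, hyx, hxz⟩ := mem_fmlSet_hullFml.1 (hx _ hφΨ)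
    exact hΦ.eq_of_mem hE hΨ (hC.out (hcon y (hφ y hy)) (hcon z (hφ z hz)) ⟨hyx, hxz⟩) hx

/-- Countably many nonisolated convex types can be avoided simultaneously when realizing a formula
over parameters avoiding them. -/
lemma exists_sat_forall_notMem_typeSet (hS : Aleph0Saturated ι S cS) (hE : CLOEquiv ι S cS M₀ c₀)
    {P : Set (Set ((CLOLang ι).Formula Unit))} (hP : P.Countable)
    (hCT : ∀ Φ ∈ P, IsConvexType ι M₀ c₀ Φ ∧ ¬ IsolatedCT ι M₀ c₀ Φ) {m : ℕ} {a : Fin m → S}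
    (ha : ∀ i, ∀ Φ ∈ P, a i ∉ TypeSet ι S cS Φ) {θ : (CLOLang ι).Formula (Unit ⊕ Fin m)} {b : S}
    (hb : Sat S cS θ (Sum.elim (fun _ => b) a)) :
    ∃ b', Sat S cS θ (Sum.elim (fun _ => b') a) ∧ ∀ Φ ∈ P, b' ∉ TypeSet ι S cS Φ := by
  classical
  obtain rfl | hne := P.eq_empty_or_nonempty
  · exact ⟨b, hb, by simp⟩
  obtain ⟨f, rfl⟩ := hP.exists_eq_range hne
  let F := {χ : (CLOLang ι).Formula (Unit ⊕ Fin m) // ∃ x, Sat S cS χ (Sum.elim (fun _ => x) a)}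
  have step : ∀ (n : ℕ) (χ : F), ∃ χ' : F,
      (∀ x, Sat S cS χ'.1 (Sum.elim (fun _ => x) a) → Sat S cS χ.1 (Sum.elim (fun _ => x) a)) ∧
      ∀ x, Sat S cS χ'.1 (Sum.elim (fun _ => x) a) → x ∉ TypeSet ι S cS (f n) := by
    rintro n ⟨χ, x, hx⟩
    obtain ⟨hf, hf'⟩ := hCT (f n) ⟨n, rfl⟩
    obtain ⟨y, hy, hyC⟩ := exists_sat_notMem_typeSet hS hE hf hf' (fun i => ha i _ ⟨n, rfl⟩) hx
    obtain ⟨ψ, hψ, hψy⟩ : ∃ ψ ∈ f n, ¬ Sat S cS ψ fun _ => y := by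
      by_contra! hcon
      exact hyC hcon
    refine ⟨⟨χ ⊓ Formula.not (Formula.relabel Sum.inl ψ), y,
      sat_inf.2 ⟨hy, sat_not.2 fun h => hψy (sat_relabel.1 h)⟩⟩, fun x hx => (sat_inf.1 hx).1,
      fun x hx hxC => sat_not.1 (sat_inf.1 hx).2 (sat_relabel.2 (hxC ψ hψ))⟩
  choose next hnext hnext' using step
  let G : ℕ → F := fun n => Nat.rec ⟨θ, b, hb⟩ next n
  have hmono : ∀ n k, n ≤ k → ∀ x, Sat S cS (G k).1 (Sum.elim (fun _ => x) a) →
      Sat S cS (G n).1 (Sum.elim (fun _ => x) a) := by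
    intro n k hnk x
    induction k, hnk using Nat.le_induction with
    | base => exact id
    | succ k _ ih => exact fun h => ih (hnext k (G k) x h)
  obtain ⟨x, hx⟩ := hS m a (Set.range fun n => (G n).1) (fun q hq => by
    rw [← Set.image_univ] at hq
    obtain ⟨s, -, rfl⟩ := Finset.subset_set_image_iff.1 hq
    obtain ⟨N, hN⟩ := s.bddAbove
    obtain ⟨x, hx⟩ := (G N).2
    refine ⟨x, ?_⟩
    simp only [Finset.forall_mem_image]
    exact fun n hn => hmono n N (hN hn) x hx)
  refine ⟨x, hx _ ⟨0, rfl⟩, ?_⟩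
  rintro _ ⟨n, rfl⟩
  exact hnext' n (G n) x (hx _ ⟨n + 1, rfl⟩)

end ConvexTypes

section Models

variable {ι M₀ S : Type} [LinearOrder M₀] {c₀ : ι → Set M₀} [LinearOrder S] {cS : ι → Set S}

/-- A countable model omitting given nonisolated convex types and containing given points. -/
lemma exists_countable_model [Countable ι] [Infinite S] (hS : Aleph0Saturated ι S cS)
    (hE : CLOEquiv ι S cS M₀ c₀) {P : Set (Set ((CLOLang ι).Formula Unit))} (hP : P.Countable)
    (hCT : ∀ Φ ∈ P, IsConvexType ι M₀ c₀ Φ ∧ ¬ IsolatedCT ι M₀ c₀ Φ)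
    {X : Set S} (hX : X.Countable) (hXP : ∀ x ∈ X, ∀ Φ ∈ P, x ∉ TypeSet ι S cS Φ) :
    ∃ (N : Type) (_ : LinearOrder N) (cN : ι → Set N), Countable N ∧ CLOEquiv ι N cN M₀ c₀ ∧
      ∃ f : N → S, (∀ (φ : (CLOLang ι).Formula Unit) (x : N),
        Sat N cN φ (fun _ => x) ↔ Sat S cS φ fun _ => f x) ∧
      (∀ x, ∀ Φ ∈ P, f x ∉ TypeSet ι S cS Φ) ∧ X ⊆ Set.range f := by
  let _ := CLOStr ι S cS
  let _ := CLOStr ι M₀ c₀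
  let A : (CLOLang ι).Substructure S :=
    { carrier := {x | ∀ Φ ∈ P, x ∉ TypeSet ι S cS Φ}
      fun_mem := fun f => Empty.elim f }
  let A' : (CLOLang ι).ElementarySubstructure S := A.toElementarySubstructure <| by
    intro n φ x a h
    let g : Empty ⊕ Fin (n + 1) → Unit ⊕ Fin n :=
      Sum.elim Empty.elim (Fin.lastCases (Sum.inl ()) Sum.inr)
    have hg : ∀ y : S, Sat S cS (φ.toFormula.relabel g) (Sum.elim (fun _ => y) fun i => (x i : S)) ↔
        φ.Realize default (Fin.snoc ((↑) ∘ x) y : Fin (n + 1) → S) := by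
      intro y
      rw [sat_relabel]
      refine (BoundedFormula.realize_toFormula φ _).trans (iff_of_eq ?_)
      congr 1
      · exact Subsingleton.elim _ _
      · funext i
        induction i using Fin.lastCases <;> simp [g]
    obtain ⟨b, hb, hbP⟩ := exists_sat_forall_notMem_typeSet hS hE hP hCT (fun i => (x i).2)
      ((hg a).2 h)
    exact ⟨⟨b, hbP⟩, (hg b).1 hb⟩
  have hAS : A' ≅[CLOLang ι] S := A'.elementarilyEquivalent
  have hAinf : Infinite A' := hAS.symm.infinite
  obtain ⟨N, hXN, hN⟩ := exists_elementarySubstructure_card_eq (L := CLOLang ι) (M := A')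
    (Subtype.val ⁻¹' X) Cardinal.aleph0.{0} le_rfl
    (by simpa using (hX.preimage Subtype.val_injective).le_aleph0)
    (by simpa using card_cloLang_le) (by simp)
  have hNM : N ≅[CLOLang ι] M₀ := (N.elementarilyEquivalent.trans hAS).trans hE
  obtain ⟨iN, cN, hcN⟩ := exists_cloStr_eq c₀ hNM
  refine ⟨N, iN, cN, ?_, cloEquiv_of_cloStr_eq hcN hNM, A'.subtype.comp N.subtype, ?_, ?_, ?_⟩
  · rw [← Cardinal.mk_le_aleph0_iff]
    simpa using hN.le
  · intro φ x
    rw [sat_iff_of_cloStr_eq hcN]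
    exact ((A'.subtype.comp N.subtype).map_formula φ fun _ => x).symm
  · exact fun x => x.1.2
  · exact fun x hx => ⟨⟨⟨x, hXP x hx⟩, hXN hx⟩, rfl⟩

lemma CLOIso.nonempty_typeSet {N K : Type} [LinearOrder N] {cN : ι → Set N} [LinearOrder K]
    {cK : ι → Set K} (h : CLOIso ι N cN K cK) {Φ : Set ((CLOLang ι).Formula Unit)}
    (hN : (TypeSet ι N cN Φ).Nonempty) : (TypeSet ι K cK Φ).Nonempty := by
  let _ := CLOStr ι N cN
  let _ := CLOStr ι K cK
  obtain ⟨e⟩ := h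
  obtain ⟨x, hx⟩ := hN
  exact ⟨e x, fun φ hφ => (StrongHomClass.realize_formula e φ).2 (hx φ hφ)⟩

lemma cloIso_of_equiv {N K : Type} [LinearOrder N] {cN : ι → Set N} [LinearOrder K]
    {cK : ι → Set K} (e : N ≃ K) (hlt : ∀ x y, e x < e y ↔ x < y)
    (hcol : ∀ k x, e x ∈ cK k ↔ x ∈ cN k) : CLOIso ι N cN K cK := by
  refine ⟨@Language.Equiv.mk (CLOLang ι) N K (CLOStr ι N cN) (CLOStr ι K cK) e
    (fun f => Empty.elim f) fun r v => ?_⟩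
  cases r with
  | lt => exact hlt _ _
  | color k => exact hcol _ _

/-- The diagram of a CLO whose points are labelled by natural numbers. -/
def cloDiagram {N : Type} [LinearOrder N] (cN : ι → Set N) (f : N → ℕ) :
    Set (ℕ ⊕ (ℕ × ℕ) ⊕ (ι × ℕ)) :=
  {d | match d with
    | Sum.inl n => ∃ x, f x = n
    | Sum.inr (Sum.inl (m, n)) => ∃ x y, f x = m ∧ f y = n ∧ x < y
    | Sum.inr (Sum.inr (k, n)) => ∃ x, f x = n ∧ x ∈ cN k}

lemma cloIso_of_cloDiagram_eq {N K : Type} [LinearOrder N] {cN : ι → Set N} [LinearOrder K]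
    {cK : ι → Set K} {f : N → ℕ} {g : K → ℕ} (hf : Function.Injective f)
    (hg : Function.Injective g) (h : cloDiagram cN f = cloDiagram cK g) :
    CLOIso ι N cN K cK := by
  have h1 : Set.range f = Set.range g := Set.ext fun n => Set.ext_iff.1 h (Sum.inl n)
  have h2 : ∀ m n, (∃ x y, f x = m ∧ f y = n ∧ x < y) ↔ ∃ x y, g x = m ∧ g y = n ∧ x < y :=
    fun m n => Set.ext_iff.1 h (Sum.inr (Sum.inl (m, n)))
  have h3 : ∀ k n, (∃ x, f x = n ∧ x ∈ cN k) ↔ ∃ x, g x = n ∧ x ∈ cK k :=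
    fun k n => Set.ext_iff.1 h (Sum.inr (Sum.inr (k, n)))
  let e : N ≃ K := (Equiv.ofInjective f hf).trans
    ((Equiv.setCongr h1).trans (Equiv.ofInjective g hg).symm)
  have he : ∀ x, g (e x) = f x := fun x => Equiv.apply_ofInjective_symm hg _
  refine cloIso_of_equiv e (fun x y => ?_) fun k x => ?_
  · have := h2 (f x) (f y)
    simpa [← he, hg.eq_iff] using this.symm
  · have := h3 k (f x)
    simpa [← he, hg.eq_iff] using this.symm

/-- There are at most continuum many countable CLOs up to isomorphism. -/
lemma exists_enumeration_countable_clo [Countable ι] :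
    ∃ (U : Set ℕ → Type) (iU : ∀ s, LinearOrder (U s)) (cU : ∀ s, ι → Set (U s)),
      ∀ (B : Type) [LinearOrder B], ∀ cB : ι → Set B, Countable B →
        ∃ s, letI := iU s; CLOIso ι B cB (U s) (cU s) := by
  obtain ⟨j, hj⟩ := Countable.exists_injective_nat (ℕ ⊕ (ℕ × ℕ) ⊕ (ι × ℕ))
  have H : ∀ s : Set ℕ, ∃ (U : Type) (iU : LinearOrder U) (cU : ι → Set U),
      ∀ (B : Type) (iB : LinearOrder B) (cB : ι → Set B) (f : B → ℕ), Function.Injective f →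
        j '' cloDiagram cB f = s → CLOIso ι B cB U cU := by
    intro s
    by_cases hs : ∃ (U : Type) (iU : LinearOrder U) (cU : ι → Set U) (g : U → ℕ),
        Function.Injective g ∧ j '' cloDiagram cU g = s
    · obtain ⟨U, iU, cU, g, hg, hgs⟩ := hs
      exact ⟨U, iU, cU, fun B iB cB f hf hfs => cloIso_of_cloDiagram_eq hf hg
        (hj.image_injective (hfs.trans hgs.symm))⟩
    · exact ⟨Empty, inferInstance, fun _ => ∅, fun B iB cB f hf hfs =>
        (hs ⟨B, iB, cB, f, hf, hfs⟩).elim⟩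
  choose U iU cU hU using H
  refine ⟨U, iU, cU, fun B iB cB hB => ?_⟩
  obtain ⟨f, hf⟩ := Countable.exists_injective_nat B
  exact ⟨_, hU _ B iB cB f hf rfl⟩

end Models

theorem stmt17 {ι : Type} [Countable ι] {M₀ : Type} [LinearOrder M₀] (c₀ : ι → Set M₀)
    (hLS : LocallySimple ι M₀ c₀)
    (hcount : {Φ | IsConvexType ι M₀ c₀ Φ}.Countable)
    (hinf : {Φ | IsConvexType ι M₀ c₀ Φ}.Infinite)
    (hni : {Φ | IsConvexType ι M₀ c₀ Φ ∧ ¬ IsolatedCT ι M₀ c₀ Φ}.Infinite) :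
    (∃ (N : Set ℕ → Type) (iN : ∀ s, LinearOrder (N s)) (cN : ∀ s, ι → Set (N s)),
      (∀ s, Countable (N s)) ∧
      (∀ s, letI := iN s; CLOEquiv ι (N s) (cN s) M₀ c₀) ∧
      ∀ s t, s ≠ t → letI := iN s; letI := iN t; ¬ CLOIso ι (N s) (cN s) (N t) (cN t)) ∧
    ∃ (U : Set ℕ → Type) (iU : ∀ s, LinearOrder (U s)) (cU : ∀ s, ι → Set (U s)),
      ∀ (B : Type) [LinearOrder B], ∀ cB : ι → Set B, Countable B →
        CLOEquiv ι B cB M₀ c₀ → ∃ s, letI := iU s; CLOIso ι B cB (U s) (cU s) := by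
  refine ⟨?_, ?_⟩
  · obtain ⟨-, B, iB, cB, hB, b, -⟩ : ∃ Φ, TypeConsistent ι M₀ c₀ Φ := by
      obtain ⟨Φ, hΦ⟩ := hinf.nonempty
      exact ⟨Φ, hΦ.2.1⟩
    have : Nonempty M₀ := by
      obtain ⟨y, -⟩ := exists_sat_of_cloEquiv hB ∅ (x := b) (by simp)
      exact ⟨y⟩
    obtain ⟨S, iS, cS, hE, hS⟩ := exists_aleph0Saturated c₀
    choose pt hpt using fun Φ (hΦ : IsConvexType ι M₀ c₀ Φ) => hS.exists_mem_typeSet hE hΦ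
    have hSinf : Infinite S := by
      have := hinf.to_subtype
      refine Infinite.of_injective
        (fun Φ : {Φ | IsConvexType ι M₀ c₀ Φ} => pt Φ.1 Φ.2) fun Φ Ψ h => Subtype.ext ?_
      refine Ψ.2.eq_of_mem hE Φ.2 (hpt Ψ.1 Ψ.2) ?_
      rw [← show pt Φ.1 Φ.2 = pt Ψ.1 Ψ.2 from h]
      exact hpt Φ.1 Φ.2
    let e := hni.natEmbedding
    have he : ∀ n, IsConvexType ι M₀ c₀ (e n).1 := fun n => (e n).2.1
    have H : ∀ s : Set ℕ, ∃ (N : Type) (iN : LinearOrder N) (cN : ι → Set N), Countable N ∧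
        CLOEquiv ι N cN M₀ c₀ ∧ ∀ n, (TypeSet ι N cN (e n).1).Nonempty ↔ n ∈ s := by
      intro s
      obtain ⟨N, iN, cN, hN, hNE, f, hf, hfP, hfX⟩ := exists_countable_model hS hE
        (P := (fun n => (e n).1) '' sᶜ) (X := (fun n => pt _ (he n)) '' s)
        ((Set.to_countable _).image _) (by
          rintro _ ⟨n, -, rfl⟩
          exact (e n).2) ((Set.to_countable _).image _) (by
          rintro _ ⟨n, hn, rfl⟩ _ ⟨k, hk, rfl⟩ hmem
          have hkn := (he n).eq_of_mem hE (he k) (hpt _ (he n)) hmem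
          exact hk (e.injective (Subtype.ext hkn) ▸ hn))
      refine ⟨N, iN, cN, hN, hNE, fun n => ⟨?_, fun hn => ?_⟩⟩
      · rintro ⟨x, hx⟩
        by_contra hn
        exact hfP x _ ⟨n, hn, rfl⟩ fun φ hφ => (hf φ x).1 (hx φ hφ)
      · obtain ⟨x, hx⟩ := hfX ⟨n, hn, rfl⟩
        exact ⟨x, fun φ hφ => (hf φ x).2 (hx ▸ hpt _ (he n) φ hφ)⟩
    choose N iN cN hN hNE hNs using H
    refine ⟨N, iN, cN, hN, hNE, fun s t hst hiso => hst (Set.ext fun n => ?_)⟩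
    rw [← hNs s n, ← hNs t n]
    refine ⟨CLOIso.nonempty_typeSet hiso, CLOIso.nonempty_typeSet ?_⟩
    obtain ⟨g⟩ := hiso
    exact ⟨@Language.Equiv.symm _ _ _ (CLOStr ..) (CLOStr ..) g⟩
  · obtain ⟨U, iU, cU, hU⟩ := exists_enumeration_countable_clo (ι := ι)
    exact ⟨U, iU, cU, fun B _ cB hB _ => hU B cB hB⟩
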